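/- In the Edwards setting, suppose the cone F contains all negative constant functions, and let g : X → (−∞, +∞] be lower semicontinuous. Then S_x(g) = I_x(g) for every x ∈ X. -/

import Mathlib

open MeasureTheory Filter Set
open scoped ENNReal

noncomputable section

/-- The nonnegative part of an extended real, as an element of `ℝ≥0∞`. -/
def erealToENNReal (x : EReal) : ℝ≥0∞ := if x = ⊤ then ⊤ else ENNReal.ofReal x.toReal

/-- The integral of an `EReal`-valued function: upper Lebesgue integral of the positive part
minus that of the negative part. -/
def erealIntegral {α : Type*} [MeasurableSpace α] (μ : Measure α) (f : α → EReal) : EReal :=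
  ((∫⁻ a, erealToENNReal (f a) ∂μ : ℝ≥0∞) : EReal) -
    ((∫⁻ a, erealToENNReal (-(f a)) ∂μ : ℝ≥0∞) : EReal)

/-- The Edwards setting: `F` is a cone of upper bounded, upper semicontinuous functions on `X`
with values in `[-∞, ∞)` (not necessarily containing the zero function). -/
def IsEdwardsCone {X : Type*} [TopologicalSpace X] (F : Set (X → EReal)) : Prop :=
  (∀ u ∈ F, UpperSemicontinuous u) ∧
  (∀ u ∈ F, ∃ K : ℝ, ∀ x, u x ≤ (K : EReal)) ∧
  (∀ u ∈ F, ∀ c : ℝ, 0 < c → (fun x => (c : EReal) * u x) ∈ F) ∧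
  (∀ u ∈ F, ∀ v ∈ F, (fun x => u x + v x) ∈ F)

/-- `M_x^F`: the positive (Borel) measures `μ` on `X` with `u(x) ≤ ∫ u dμ` for all `u ∈ F`. -/
def edwardsM {X : Type*} [MeasurableSpace X] (F : Set (X → EReal)) (x : X) :
    Set (Measure X) :=
  { μ | ∀ u ∈ F, u x ≤ erealIntegral μ u }

/-- `S_x(g) = sup { u(x) : u ∈ F, u ≤ g }` (`= -∞`, i.e. `sSup ∅`, if no `u ∈ F` satisfies
`u ≤ g`). -/
def edwardsS {X : Type*} (F : Set (X → EReal)) (x : X) (g : X → EReal) : EReal :=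
  sSup { t : EReal | ∃ u ∈ F, (∀ y, u y ≤ g y) ∧ t = u x }

/-- `I_x(g) = inf { ∫ g dμ : μ ∈ M_x^F }`. -/
def edwardsI {X : Type*} [MeasurableSpace X] (F : Set (X → EReal)) (x : X)
    (g : X → EReal) : EReal :=
  sInf { t : EReal | ∃ μ ∈ edwardsM F x, t = erealIntegral μ g }

/-- `C_x^F = { μ ∈ M_x^F : μ(X) ≤ -S_x(-𝟙) }`. -/
def edwardsC {X : Type*} [MeasurableSpace X] (F : Set (X → EReal)) (x : X) :
    Set (Measure X) :=
  { μ | μ ∈ edwardsM F x ∧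
      ((μ Set.univ : ℝ≥0∞) : EReal) ≤ -(edwardsS F x (fun _ => (-1 : EReal))) }

/-!
Weak duality `S_x(g) ≤ I_x(g)` is immediate. For the converse, `S_x` is finite and superlinear on
`C(X)`, and `S_x ≤ S_x(g)` on the convex set of continuous `φ ≤ g`. By the Mazur–Orlicz theorem some
linear functional dominates `S_x` on `C(X)` and is still at most `S_x(g)` on that set. It is
positive, hence is integration against a regular measure `μ`. Semicontinuous integrands are reached
from continuous ones by the Vitali–Carathéodory theorem and continuous insertion, which gives both
`μ ∈ M_x^F` and `∫ g dμ ≤ S_x(g)`.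
-/

section MazurOrlicz

open scoped NNReal

variable {E : Type*} [AddCommGroup E] [Module ℝ E] {p : E → ℝ} {K : Set E} {b : ℝ}

/-- A superlinear functional: positively homogeneous and superadditive. -/
structure IsSuperlinear (p : E → ℝ) : Prop where
  map_smul_of_pos : ∀ c : ℝ, 0 < c → ∀ x, p (c • x) = c * p x
  add_le_map_add : ∀ x y, p x + p y ≤ p (x + y)

/-- The functional `N` to which Hahn–Banach is applied in the Mazur–Orlicz theorem: for `p`
superlinear and at most `b` on `K ≠ ∅`, a linear `Λ` satisfies `Λ ≤ N` if and only if `p ≤ Λ`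
everywhere and `Λ ≤ b` on `K`. -/
def mazurOrliczFunctional (p : E → ℝ) (K : Set E) (b : ℝ) (x : E) : ℝ :=
  ⨅ i : ℝ≥0 × K, (i.1 * b - p (i.1 • (i.2 : E) - x))

namespace IsSuperlinear

lemma map_zero (hp : IsSuperlinear p) : p 0 = 0 := by
  have h := hp.map_smul_of_pos 2 two_pos 0
  rw [smul_zero] at h
  linarith

lemma map_smul (hp : IsSuperlinear p) (c : ℝ≥0) (x : E) : p (c • x) = c * p x := by
  rcases eq_zero_or_pos c with rfl | hc
  · simp [hp.map_zero]
  · exact hp.map_smul_of_pos c hc x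

lemma mazurOrliczFunctional_le (hp : IsSuperlinear p) (hb : ∀ k ∈ K, p k ≤ b) (l : ℝ≥0) {k : E}
    (hk : k ∈ K) (x : E) : mazurOrliczFunctional p K b x ≤ l * b - p (l • k - x) := by
  refine ciInf_le (f := fun i : ℝ≥0 × K => i.1 * b - p (i.1 • (i.2 : E) - x))
    ⟨p x, forall_mem_range.2 fun ⟨m, v, hv⟩ => ?_⟩ (l, ⟨k, hk⟩)
  have h : p x + p (m • v - x) ≤ m * b := calc
    p x + p (m • v - x) ≤ p (x + (m • v - x)) := hp.add_le_map_add _ _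
    _ = m * p v := by rw [add_sub_cancel, hp.map_smul]
    _ ≤ m * b := by gcongr; exact hb v hv
  linarith

lemma mazurOrliczFunctional_smul (hp : IsSuperlinear p) {c : ℝ} (hc : 0 < c) (x : E) :
    mazurOrliczFunctional p K b (c • x) = c * mazurOrliczFunctional p K b x := by
  lift c to ℝ≥0 using hc.le
  have hc0 : c ≠ 0 := by simpa using hc.ne'
  rw [mazurOrliczFunctional, mazurOrliczFunctional, Real.mul_iInf_of_nonneg hc.le]
  refine (((Equiv.mulLeft₀ c hc0).prodCongr (Equiv.refl K)).iInf_congr fun ⟨l, k⟩ => ?_).symm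
  change (c * l : ℝ) * b - p ((c * l) • (k : E) - c • x) = c * (l * b - p (l • (k : E) - x))
  rw [mul_smul, ← smul_sub, hp.map_smul]
  ring

lemma mazurOrliczFunctional_add_le (hp : IsSuperlinear p) (hK : Convex ℝ K) (hKne : K.Nonempty)
    (hb : ∀ k ∈ K, p k ≤ b) (x y : E) :
    mazurOrliczFunctional p K b (x + y) ≤
      mazurOrliczFunctional p K b x + mazurOrliczFunctional p K b y := by
  have := hKne.to_subtype
  refine le_ciInf_add_ciInf fun ⟨l, v, hv⟩ ⟨m, w, hw⟩ => ?_
  obtain ⟨k, hk, hk_eq⟩ : ∃ k ∈ K, (l + m) • k = l • v + m • w :=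
    hK.exists_mem_add_smul_eq hv hw l.2 m.2
  have h_add := hp.add_le_map_add (l • v - x) (m • w - y)
  calc mazurOrliczFunctional p K b (x + y)
      ≤ (l + m : ℝ≥0) * b - p ((l + m) • k - (x + y)) := hp.mazurOrliczFunctional_le hb _ hk _
    _ = l * b + m * b - p (l • v - x + (m • w - y)) := by
      rw [hk_eq, add_sub_add_comm, NNReal.coe_add, add_mul]
    _ ≤ l * b - p (l • v - x) + (m * b - p (m • w - y)) := by linarith

theorem exists_linearMap_ge_le_on_convex (hp : IsSuperlinear p) (hK : Convex ℝ K)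
    (hKne : K.Nonempty) (hb : ∀ k ∈ K, p k ≤ b) :
    ∃ Λ : E →ₗ[ℝ] ℝ, (∀ x, p x ≤ Λ x) ∧ ∀ k ∈ K, Λ k ≤ b := by
  obtain ⟨k₀, hk₀⟩ := hKne
  have h_zero : mazurOrliczFunctional p K b 0 = 0 := by
    have h := hp.mazurOrliczFunctional_smul (K := K) (b := b) two_pos 0
    rw [smul_zero] at h
    linarith
  obtain ⟨Λ, -, hΛ⟩ := exists_extension_of_le_sublinear (⟨⊥, 0⟩ : E →ₗ.[ℝ] ℝ)
    (mazurOrliczFunctional p K b) (fun _ hc => hp.mazurOrliczFunctional_smul hc)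
    (hp.mazurOrliczFunctional_add_le hK ⟨k₀, hk₀⟩ hb) (by rintro ⟨_, rfl⟩; exact h_zero.ge)
  refine ⟨Λ, fun x => ?_, fun k hk => ?_⟩
  · have h := (hΛ (-x)).trans (hp.mazurOrliczFunctional_le hb 0 hk₀ (-x))
    simp only [map_neg, NNReal.coe_zero, zero_mul, zero_smul, sub_neg_eq_add, zero_add,
      zero_sub] at h
    linarith
  · simpa [hp.map_zero] using (hΛ k).trans (hp.mazurOrliczFunctional_le hb 1 hk k)

end IsSuperlinear

end MazurOrlicz

lemma erealToENNReal_eq_toENNReal : erealToENNReal = EReal.toENNReal := rfl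

lemma coe_toENNReal_sub_coe_toENNReal_neg (a : EReal) :
    (a.toENNReal : EReal) - ((-a).toENNReal : EReal) = a := by
  rcases le_total 0 a with ha | ha
  · rw [EReal.coe_toENNReal ha, EReal.toENNReal_of_nonpos (EReal.neg_le_zero.2 ha)]
    simp
  · rw [EReal.toENNReal_of_nonpos ha, EReal.coe_toENNReal (EReal.neg_nonneg.2 ha)]
    simp

section Integral

open scoped NNReal

variable {α : Type*} [MeasurableSpace α] {μ : Measure α} {f g : α → EReal}

lemma erealIntegral_mono (h : ∀ a, f a ≤ g a) : erealIntegral μ f ≤ erealIntegral μ g := by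
  refine EReal.sub_le_sub (EReal.coe_ennreal_le_coe_ennreal_iff.2 (lintegral_mono fun a => ?_))
    (EReal.coe_ennreal_le_coe_ennreal_iff.2 (lintegral_mono fun a => ?_))
  · exact EReal.toENNReal_le_toENNReal (h a)
  · exact EReal.toENNReal_le_toENNReal (EReal.neg_le_neg_iff.2 (h a))

lemma lintegral_toENNReal_neg_ne_top {h : α → ℝ} (h_int : Integrable h μ)
    (h_le : ∀ a, (h a : EReal) ≤ f a) : ∫⁻ a, (-f a).toENNReal ∂μ ≠ ⊤ := by
  refine ne_top_of_le_ne_top h_int.neg.lintegral_lt_top.ne (lintegral_mono fun a => ?_)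
  simpa using EReal.toENNReal_le_toENNReal (EReal.neg_le_neg_iff.2 (h_le a))

lemma erealIntegral_neg {h : α → ℝ} (h_int : Integrable h μ) (h_le : ∀ a, (h a : EReal) ≤ f a) :
    erealIntegral μ (fun a => -f a) = -erealIntegral μ f := by
  simp only [erealIntegral, erealToENNReal_eq_toENNReal, neg_neg]
  rw [EReal.neg_sub (by simp) (by simp [lintegral_toENNReal_neg_ne_top h_int h_le]), add_comm,
    sub_eq_add_neg]

lemma lintegral_le_ofReal_of_forall_simpleFunc_le [IsFiniteMeasure μ] {h : α → ℝ≥0∞} {r : ℝ}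
    (hr : ∀ φ : SimpleFunc α ℝ≥0, (∀ a, (φ a : ℝ≥0∞) ≤ h a) → ∫ a, (φ a : ℝ) ∂μ ≤ r) :
    ∫⁻ a, h a ∂μ ≤ ENNReal.ofReal r := by
  rw [lintegral_eq_nnreal]
  refine iSup₂_le fun φ hφ => ?_
  rw [← SimpleFunc.lintegral_eq_lintegral]
  have hφ_int : Integrable (fun a => (φ a : ℝ)) μ :=
    (φ.map ((↑) : ℝ≥0 → ℝ)).integrable_of_isFiniteMeasure
  calc ∫⁻ a, φ.map (↑) a ∂μ = ENNReal.ofReal (∫ a, (φ a : ℝ) ∂μ) := by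
        simp [ofReal_integral_eq_lintegral_ofReal hφ_int (ae_of_all _ fun a => (φ a).coe_nonneg)]
    _ ≤ ENNReal.ofReal r := ENNReal.ofReal_le_ofReal (hr φ hφ)

lemma erealIntegral_le_of_forall_integrable_le [IsFiniteMeasure μ] (hf : Measurable f)
    {h : α → ℝ} (h_int : Integrable h μ) (h_le : ∀ a, (h a : EReal) ≤ f a) {s : ℝ}
    (hs : ∀ k : α → ℝ, Integrable k μ → (∀ a, (k a : EReal) ≤ f a) → ∫ a, k a ∂μ ≤ s) :
    erealIntegral μ f ≤ s := by
  have h_fin := lintegral_toENNReal_neg_ne_top h_int h_le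
  have h_meas : AEMeasurable (fun a => (-f a).toENNReal) μ := by fun_prop
  set n : α → ℝ := fun a => (-f a).toENNReal.toReal
  have hn_int : Integrable n μ := integrable_toReal_of_lintegral_ne_top h_meas h_fin
  have hn_coe : ∀ a, (n a : EReal) = (-f a).toENNReal := fun a => by
    have h_bot : f a ≠ ⊥ := ne_bot_of_le_ne_bot (EReal.coe_ne_bot _) (h_le a)
    exact EReal.coe_ennreal_toReal (by simpa using h_bot)
  have h_neg : ((∫⁻ a, (-f a).toENNReal ∂μ : ℝ≥0∞) : EReal) = (∫ a, n a ∂μ : ℝ) := by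
    rw [integral_toReal h_meas (ae_lt_top' h_meas h_fin), EReal.coe_ennreal_toReal h_fin]
  have h_simple : ∀ φ : SimpleFunc α ℝ≥0, (∀ a, (φ a : ℝ≥0∞) ≤ (f a).toENNReal) →
      ∫ a, (φ a : ℝ) ∂μ ≤ s + ∫ a, n a ∂μ := fun φ hφ => by
    have hφ_int : Integrable (fun a => (φ a : ℝ)) μ :=
      (φ.map ((↑) : ℝ≥0 → ℝ)).integrable_of_isFiniteMeasure
    have h_sub := hs (fun a => φ a - n a) (hφ_int.sub hn_int) fun a => by
      rw [← coe_toENNReal_sub_coe_toENNReal_neg (f a), EReal.coe_sub, hn_coe]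
      exact EReal.sub_le_sub (EReal.coe_ennreal_le_coe_ennreal_iff.2 (hφ a)) le_rfl
    rw [integral_sub hφ_int hn_int] at h_sub
    linarith
  have h_nonneg : 0 ≤ s + ∫ a, n a ∂μ := by simpa using h_simple 0 (by simp)
  have h_pos := EReal.coe_ennreal_le_coe_ennreal_iff.2
    (lintegral_le_ofReal_of_forall_simpleFunc_le h_simple)
  rw [EReal.coe_ennreal_ofReal, max_eq_left h_nonneg, EReal.coe_add] at h_pos
  rw [erealIntegral, erealToENNReal_eq_toENNReal, h_neg]
  exact EReal.sub_le_of_le_add h_pos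

end Integral

section Semicontinuous

variable {X : Type*} [TopologicalSpace X]

lemma convex_setOf_continuousMap_le (g : X → EReal) :
    Convex ℝ {φ : C(X, ℝ) | ∀ y, (φ y : EReal) ≤ g y} := by
  have h_convex : ∀ y, Convex ℝ {r : ℝ | (r : EReal) ≤ g y} := fun y =>
    OrdConnected.convex ⟨fun _ _ _ hb _ hc => (EReal.coe_le_coe hc.2).trans hb⟩
  exact fun φ hφ ψ hψ a b ha hb hab y => h_convex y (hφ y) (hψ y) ha hb hab

lemma exists_continuousMap_between [NormalSpace X] [ParacompactSpace X] {g f : X → EReal}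
    (hg : UpperSemicontinuous g) (hf : LowerSemicontinuous f) (hgf : ∀ x, g x < f x) :
    ∃ φ : C(X, ℝ), ∀ x, g x < φ x ∧ φ x < f x := by
  refine exists_continuous_forall_mem_convex_of_local_const
    (t := fun x => {r : ℝ | g x < r ∧ (r : EReal) < f x}) (fun x => ?_) fun x => ?_
  · exact OrdConnected.convex ⟨fun a ha b hb c hc => ⟨ha.1.trans_le (EReal.coe_le_coe hc.1),
      (EReal.coe_le_coe hc.2).trans_lt hb.2⟩⟩
  · obtain ⟨c, hgc, hcf⟩ := EReal.lt_iff_exists_real_btwn.1 (hgf x)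
    exact ⟨c, (hg x c hgc).and (hf x c hcf)⟩

lemma exists_continuousMap_lt [NormalSpace X] [ParacompactSpace X] {f : X → EReal}
    (hf : LowerSemicontinuous f) (hf_bot : ∀ x, f x ≠ ⊥) :
    ∃ φ : C(X, ℝ), ∀ x, φ x < f x := by
  obtain ⟨φ, hφ⟩ := exists_continuousMap_between upperSemicontinuous_const hf
    fun x => bot_lt_iff_ne_bot.2 (hf_bot x)
  exact ⟨φ, fun x => (hφ x).2⟩

variable [CompactSpace X] [MeasurableSpace X] [BorelSpace X] {μ : Measure X} [IsFiniteMeasure μ]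

lemma integrable_continuousMap (φ : C(X, ℝ)) : Integrable φ μ :=
  φ.continuous.integrable_of_hasCompactSupport (HasCompactSupport.of_compactSpace _)

lemma erealIntegral_le_of_forall_continuousMap_le [NormalSpace X] [μ.WeaklyRegular] {f : X → EReal}
    (hf : LowerSemicontinuous f) (hf_bot : ∀ x, f x ≠ ⊥) {s : ℝ}
    (hs : ∀ φ : C(X, ℝ), (∀ x, (φ x : EReal) ≤ f x) → ∫ x, φ x ∂μ ≤ s) :
    erealIntegral μ f ≤ s := by
  obtain ⟨φ₀, hφ₀⟩ := exists_continuousMap_lt hf hf_bot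
  refine erealIntegral_le_of_forall_integrable_le hf.measurable (integrable_continuousMap φ₀)
    (fun x => (hφ₀ x).le) fun k hk hkf => le_of_forall_pos_le_add fun ε hε => ?_
  obtain ⟨g, hgk, hg, hg_int, hg_bot, hkg⟩ := exists_upperSemicontinuous_lt_integral_gt k hk hε
  obtain ⟨φ, hφ⟩ := exists_continuousMap_between hg hf fun x => (hgk x).trans_le (hkf x)
  have hgφ : ∫ x, (g x).toReal ∂μ ≤ ∫ x, φ x ∂μ := by
    refine integral_mono_ae hg_int (integrable_continuousMap φ) ?_
    filter_upwards [hg_bot] with x hx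
    exact EReal.toReal_le_toReal (hφ x).1.le hx.ne' (EReal.coe_ne_top _)
  linarith [hs φ fun x => (hφ x).2.le]

lemma le_erealIntegral_of_forall_le_continuousMap [NormalSpace X] [μ.WeaklyRegular] {u : X → EReal}
    (hu : UpperSemicontinuous u) (hu_top : ∀ x, u x ≠ ⊤) {s : ℝ}
    (hs : ∀ φ : C(X, ℝ), (∀ x, u x ≤ φ x) → s ≤ ∫ x, φ x ∂μ) :
    s ≤ erealIntegral μ u := by
  have hu_neg : LowerSemicontinuous fun x => -u x :=
    continuous_neg.comp_upperSemicontinuous_antitone hu fun _ _ h => EReal.neg_le_neg_iff.2 h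
  have hu_bot : ∀ x, -u x ≠ ⊥ := fun x => by simpa using hu_top x
  obtain ⟨φ₀, hφ₀⟩ := exists_continuousMap_lt hu_neg hu_bot
  have h_neg : erealIntegral μ (fun x => -u x) ≤ (-s : ℝ) := by
    refine erealIntegral_le_of_forall_continuousMap_le hu_neg hu_bot fun φ hφ => ?_
    have h := hs (-φ) fun x => by simpa using EReal.le_neg_of_le_neg (hφ x)
    simp only [ContinuousMap.neg_apply, integral_neg] at h
    linarith
  have h := erealIntegral_neg (integrable_continuousMap φ₀) (μ := μ) fun x => (hφ₀ x).le
  simp only [neg_neg] at h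
  rw [h, EReal.le_neg]
  simpa using h_neg

end Semicontinuous

section Cone

variable {X : Type*} {F : Set (X → EReal)} {x : X} {f g : X → EReal}

lemma le_edwardsS {u : X → EReal} (hu : u ∈ F) (hug : ∀ y, u y ≤ g y) : u x ≤ edwardsS F x g :=
  le_sSup ⟨u, hu, hug, rfl⟩

lemma edwardsS_mono (hfg : ∀ y, f y ≤ g y) : edwardsS F x f ≤ edwardsS F x g := by
  refine sSup_le ?_
  rintro _ ⟨u, hu, huf, rfl⟩
  exact le_edwardsS hu fun y => (huf y).trans (hfg y)

lemma edwardsS_le_apply : edwardsS F x g ≤ g x := by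
  refine sSup_le ?_
  rintro _ ⟨u, -, hug, rfl⟩
  exact hug x

lemma edwardsS_le_edwardsI [MeasurableSpace X] : edwardsS F x g ≤ edwardsI F x g := by
  refine sSup_le ?_
  rintro _ ⟨u, hu, hug, rfl⟩
  refine le_sInf ?_
  rintro _ ⟨μ, hμ, rfl⟩
  exact (hμ u hu).trans (erealIntegral_mono hug)

variable [TopologicalSpace X]

lemma IsEdwardsCone.edwardsS_add_le (hF : IsEdwardsCone F) :
    edwardsS F x f + edwardsS F x g ≤ edwardsS F x (fun y => f y + g y) := by
  refine EReal.add_le_of_forall_lt fun a ha b hb => ?_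
  obtain ⟨_, ⟨u, hu, huf, rfl⟩, hau⟩ := lt_sSup_iff.1 ha
  obtain ⟨_, ⟨v, hv, hvg, rfl⟩, hbv⟩ := lt_sSup_iff.1 hb
  exact (add_le_add hau.le hbv.le).trans
    (le_edwardsS (hF.2.2.2 u hu v hv) fun y => add_le_add (huf y) (hvg y))

lemma IsEdwardsCone.mul_edwardsS_le (hF : IsEdwardsCone F) {c : ℝ} (hc : 0 < c) :
    c * edwardsS F x g ≤ edwardsS F x (fun y => c * g y) := by
  have hc' : (0 : EReal) < c := EReal.coe_pos.2 hc
  rw [mul_comm, ← EReal.le_div_iff_mul_le hc' (EReal.coe_ne_top c)]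
  refine sSup_le ?_
  rintro _ ⟨u, hu, hug, rfl⟩
  rw [EReal.le_div_iff_mul_le hc' (EReal.coe_ne_top c), mul_comm]
  exact le_edwardsS (hF.2.2.1 u hu c hc) fun y => mul_le_mul_of_nonneg_left (hug y) hc'.le

lemma IsEdwardsCone.edwardsS_mul (hF : IsEdwardsCone F) {c : ℝ} (hc : 0 < c) :
    edwardsS F x (fun y => c * g y) = c * edwardsS F x g := by
  refine le_antisymm ?_ (hF.mul_edwardsS_le hc)
  have h_inv : ((c⁻¹ : ℝ) : EReal) * c = 1 := by
    rw [← EReal.coe_mul, inv_mul_cancel₀ hc.ne', EReal.coe_one]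
  calc edwardsS F x (fun y => c * g y)
      = c * ((c⁻¹ : ℝ) * edwardsS F x fun y => c * g y) := by
        rw [← mul_assoc, mul_comm (c : EReal), h_inv, one_mul]
    _ ≤ c * edwardsS F x (fun y => (c⁻¹ : ℝ) * (c * g y)) :=
        mul_le_mul_of_nonneg_left (hF.mul_edwardsS_le (inv_pos.2 hc)) (EReal.coe_pos.2 hc).le
    _ = c * edwardsS F x g := by simp only [← mul_assoc, h_inv, one_mul]

end Cone

section Functional

variable {X : Type*} [TopologicalSpace X] {F : Set (X → EReal)} {x : X}

/-- The functional `φ ↦ S_x(φ)` on continuous functions. The truncation by `toReal` is harmless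
when `X` is compact and `F` contains the negative constants, as `S_x(φ)` is then finite. -/
def edwardsFunctional (F : Set (X → EReal)) (x : X) (φ : C(X, ℝ)) : ℝ :=
  (edwardsS F x fun y => (φ y : EReal)).toReal

variable [CompactSpace X]

lemma coe_edwardsFunctional (hconst : ∀ c : ℝ, c < 0 → (fun _ : X => (c : EReal)) ∈ F)
    (φ : C(X, ℝ)) :
    (edwardsFunctional F x φ : EReal) = edwardsS F x fun y => (φ y : EReal) := by
  obtain ⟨m, hm⟩ := (isCompact_range φ.continuous).bddBelow
  have h_lower : ((min m (-1) : ℝ) : EReal) ≤ edwardsS F x fun y => (φ y : EReal) :=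
    le_edwardsS (hconst _ (min_lt_of_right_lt neg_one_lt_zero)) fun y =>
      EReal.coe_le_coe ((min_le_left _ _).trans (hm (mem_range_self y)))
  exact EReal.coe_toReal (ne_top_of_le_ne_top (EReal.coe_ne_top _) edwardsS_le_apply)
    (ne_bot_of_le_ne_bot (EReal.coe_ne_bot _) h_lower)

lemma edwardsFunctional_nonneg (hconst : ∀ c : ℝ, c < 0 → (fun _ : X => (c : EReal)) ∈ F)
    {φ : C(X, ℝ)} (hφ : 0 ≤ φ) : 0 ≤ edwardsFunctional F x φ := by
  refine le_of_forall_lt_imp_le_of_dense fun c hc => ?_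
  rw [← EReal.coe_le_coe_iff, coe_edwardsFunctional hconst]
  exact le_edwardsS (hconst c hc) fun y => EReal.coe_le_coe (hc.le.trans (hφ y))

lemma IsEdwardsCone.isSuperlinear_edwardsFunctional (hF : IsEdwardsCone F)
    (hconst : ∀ c : ℝ, c < 0 → (fun _ : X => (c : EReal)) ∈ F) :
    IsSuperlinear (edwardsFunctional F x) where
  map_smul_of_pos c hc φ := by
    rw [← EReal.coe_eq_coe_iff, EReal.coe_mul, coe_edwardsFunctional hconst,
      coe_edwardsFunctional hconst, ← hF.edwardsS_mul hc]
    simp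
  add_le_map_add φ ψ := by
    rw [← EReal.coe_le_coe_iff, EReal.coe_add]
    simpa only [coe_edwardsFunctional hconst, ContinuousMap.add_apply, EReal.coe_add] using
      hF.edwardsS_add_le

end Functional

section Duality

variable {X : Type*} [TopologicalSpace X] [T2Space X] [CompactSpace X] [MeasurableSpace X]
  [BorelSpace X] {F : Set (X → EReal)} {x : X}

lemma exists_regular_measure_integral_eq (Λ : C(X, ℝ) →ₗ[ℝ] ℝ) (hΛ : ∀ φ, 0 ≤ φ → 0 ≤ Λ φ) :
    ∃ μ : Measure X, IsFiniteMeasure μ ∧ μ.Regular ∧ ∀ φ : C(X, ℝ), ∫ y, φ y ∂μ = Λ φ := by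
  let Λc : CompactlySupportedContinuousMap X ℝ →ₚ[ℝ] ℝ := PositiveLinearMap.mk₀
    { toFun := fun φ => Λ φ
      map_add' := fun φ ψ => map_add Λ (φ : C(X, ℝ)) ψ
      map_smul' := fun c φ => map_smul Λ c (φ : C(X, ℝ)) } fun φ hφ => hΛ φ hφ
  exact ⟨RealRMK.rieszMeasure Λc, inferInstance, inferInstance, fun φ =>
    RealRMK.integral_rieszMeasure Λc (CompactlySupportedContinuousMap.continuousMapEquiv φ)⟩

lemma IsEdwardsCone.exists_measure_edwardsS_le_integral_le (hF : IsEdwardsCone F)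
    (hconst : ∀ c : ℝ, c < 0 → (fun _ : X => (c : EReal)) ∈ F) {K : Set C(X, ℝ)}
    (hK : Convex ℝ K) (hKne : K.Nonempty) {s : ℝ}
    (hs : ∀ φ ∈ K, edwardsS F x (fun y => (φ y : EReal)) ≤ s) :
    ∃ μ : Measure X, IsFiniteMeasure μ ∧ μ.Regular ∧
      (∀ φ : C(X, ℝ), edwardsS F x (fun y => (φ y : EReal)) ≤ (∫ y, φ y ∂μ : ℝ)) ∧
      ∀ φ ∈ K, ∫ y, φ y ∂μ ≤ s := by
  simp only [← coe_edwardsFunctional hconst, EReal.coe_le_coe_iff] at hs ⊢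
  obtain ⟨Λ, hΛ_ge, hΛ_le⟩ :=
    (hF.isSuperlinear_edwardsFunctional hconst).exists_linearMap_ge_le_on_convex hK hKne hs
  obtain ⟨μ, hμ_fin, hμ_reg, hμ⟩ := exists_regular_measure_integral_eq Λ fun φ hφ =>
    (edwardsFunctional_nonneg hconst hφ).trans (hΛ_ge φ)
  exact ⟨μ, hμ_fin, hμ_reg, by simpa only [hμ] using ⟨hΛ_ge, hΛ_le⟩⟩

lemma IsEdwardsCone.mem_edwardsM_of_edwardsS_le_integral (hF : IsEdwardsCone F) {μ : Measure X}
    [IsFiniteMeasure μ] [μ.WeaklyRegular]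
    (hμ : ∀ φ : C(X, ℝ), edwardsS F x (fun y => (φ y : EReal)) ≤ (∫ y, φ y ∂μ : ℝ)) :
    μ ∈ edwardsM F x := by
  intro u hu
  have hu_top : ∀ y, u y ≠ ⊤ := fun y =>
    let ⟨K, hK⟩ := hF.2.1 u hu
    ne_top_of_le_ne_top (EReal.coe_ne_top K) (hK y)
  refine EReal.ge_of_forall_gt_iff_ge.1 fun s hs => ?_
  refine le_erealIntegral_of_forall_le_continuousMap (hF.1 u hu) hu_top fun φ huφ => ?_
  exact EReal.coe_le_coe_iff.1 <| hs.le.trans <| (le_edwardsS hu huφ).trans (hμ φ)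

theorem edwards_of_neg_constants_general (hF : IsEdwardsCone F)
    (hconst : ∀ c : ℝ, c < 0 → (fun _ : X => (c : EReal)) ∈ F)
    {g : X → EReal} (hg : LowerSemicontinuous g) (hgbot : ∀ y, g y ≠ ⊥) (x : X) :
    edwardsS F x g = edwardsI F x g := by
  refine le_antisymm edwardsS_le_edwardsI ?_
  obtain ⟨φ₀, hφ₀⟩ := exists_continuousMap_lt hg hgbot
  have h_bot : edwardsS F x g ≠ ⊥ :=
    ne_bot_of_le_ne_bot (EReal.coe_ne_bot (edwardsFunctional F x φ₀)) <|
      (coe_edwardsFunctional hconst φ₀).trans_le (edwardsS_mono fun y => (hφ₀ y).le)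
  rcases eq_or_ne (edwardsS F x g) ⊤ with h_top | h_top
  · exact h_top ▸ le_top
  obtain ⟨s, hs⟩ : ∃ s : ℝ, (s : EReal) = edwardsS F x g := ⟨_, EReal.coe_toReal h_top h_bot⟩
  obtain ⟨μ, _, _, hμ_ge, hμ_le⟩ := hF.exists_measure_edwardsS_le_integral_le hconst
    (convex_setOf_continuousMap_le g) ⟨φ₀, fun y => (hφ₀ y).le⟩ fun φ hφ =>
      (edwardsS_mono hφ).trans hs.ge
  calc edwardsI F x g ≤ erealIntegral μ g :=
        sInf_le ⟨μ, hF.mem_edwardsM_of_edwardsS_le_integral hμ_ge, rfl⟩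
    _ ≤ s := erealIntegral_le_of_forall_continuousMap_le hg hgbot hμ_le
    _ = edwardsS F x g := hs

end Duality

/-- If the cone `F` contains all negative constant functions, then `S_x(g) = I_x(g)` for
every lower semicontinuous `g : X → (-∞, ∞]` and every `x ∈ X`. -/
theorem edwards_of_neg_constants {X : Type*} [MetricSpace X] [CompactSpace X]
    [MeasurableSpace X] [BorelSpace X] (F : Set (X → EReal)) (hF : IsEdwardsCone F)
    (hconst : ∀ c : ℝ, c < 0 → (fun _ : X => (c : EReal)) ∈ F)
    (g : X → EReal) (hg : LowerSemicontinuous g) (hgbot : ∀ y, g y ≠ ⊥) :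
    ∀ x : X, edwardsS F x g = edwardsI F x g :=
  edwards_of_neg_constants_general hF hconst hg hgbot

end
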